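/- arXiv:math/9805104 — 10 statements merged into one kernel-verified Lean document; each statement's English description precedes it below -/
import Mathlib

section
/- A weak bialgebra A is left-monoidal (i.e. ε(abc) = ε(a b₍₁₎) ε(b₍₂₎ c) for all a, b, c) if and only if for all a, b in A: a ε_RR(b) = ε(a₍₂₎ b) a₍₁₎. -/
open TensorProduct

noncomputable section

variable (K A : Type*) [Field K] [Ring A] [Algebra K A] [Coalgebra K A]

/-- The linear map `a ↦ a ⊗ 1`. -/
def inclL : A →ₗ[K] A ⊗[K] A := (TensorProduct.mk K A A).flip 1

/-- The linear map `a ↦ 1 ⊗ a`. -/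
def inclR : A →ₗ[K] A ⊗[K] A := TensorProduct.mk K A A 1

/-- `ε_LL(a) = ε(a 1₍₁₎) 1₍₂₎`. -/
def eLL : A →ₗ[K] A :=
  (TensorProduct.lid K A).toLinearMap ∘ₗ
    LinearMap.rTensor A (Coalgebra.counit (R := K) (A := A)) ∘ₗ
    LinearMap.mulRight K (Coalgebra.comul (R := K) (1 : A)) ∘ₗ inclL K A

/-- `ε_RR(a) = 1₍₁₎ ε(1₍₂₎ a)`. -/
def eRR : A →ₗ[K] A :=
  (TensorProduct.rid K A).toLinearMap ∘ₗ
    LinearMap.lTensor A (Coalgebra.counit (R := K) (A := A)) ∘ₗ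
    LinearMap.mulLeft K (Coalgebra.comul (R := K) (1 : A)) ∘ₗ inclR K A

/-- `ε_LR(a) = ε(1₍₁₎ a) 1₍₂₎`. -/
def eLR : A →ₗ[K] A :=
  (TensorProduct.lid K A).toLinearMap ∘ₗ
    LinearMap.rTensor A (Coalgebra.counit (R := K) (A := A)) ∘ₗ
    LinearMap.mulLeft K (Coalgebra.comul (R := K) (1 : A)) ∘ₗ inclL K A

/-- `ε_RL(a) = 1₍₁₎ ε(a 1₍₂₎)`. -/
def eRL : A →ₗ[K] A :=
  (TensorProduct.rid K A).toLinearMap ∘ₗ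
    LinearMap.lTensor A (Coalgebra.counit (R := K) (A := A)) ∘ₗ
    LinearMap.mulRight K (Coalgebra.comul (R := K) (1 : A)) ∘ₗ inclR K A

/-- Convolution product: `(conv f g)(a) = f(a₍₁₎) g(a₍₂₎)` (implicit Sweedler sums). -/
def conv (f g : A →ₗ[K] A) : A →ₗ[K] A :=
  LinearMap.mul' K A ∘ₗ TensorProduct.map f g ∘ₗ Coalgebra.comul (R := K)

/-- Opposite convolution: `(copConv f g)(a) = f(a₍₂₎) g(a₍₁₎)`. -/
def copConv (f g : A →ₗ[K] A) : A →ₗ[K] A :=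
  LinearMap.mul' K A ∘ₗ TensorProduct.map f g ∘ₗ
    (TensorProduct.comm K A A).toLinearMap ∘ₗ Coalgebra.comul (R := K)

/-- `ε ⊗ ε` as a functional on `A ⊗ A`. -/
def pairCC : A ⊗[K] A →ₗ[K] K :=
  (TensorProduct.lid K K).toLinearMap ∘ₗ
    TensorProduct.map (Coalgebra.counit (R := K) (A := A)) (Coalgebra.counit (R := K) (A := A))

/-- `a ↦ ε(a)·1`. -/
def epsUnit : A →ₗ[K] A := Algebra.linearMap K A ∘ₗ Coalgebra.counit (R := K)

/-- `b ↦ (x ↦ ε(b x))`, i.e. the map `ε_L : A → Â`. -/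
def epsLfun : A →ₗ[K] A →ₗ[K] K :=
  LinearMap.llcomp K A A K (Coalgebra.counit (R := K) (A := A)) ∘ₗ LinearMap.mul K A

/-- The weak-bialgebra axiom: the coproduct is multiplicative. -/
def WeakBialg : Prop :=
  ∀ a b : A, Coalgebra.comul (R := K) (a * b) =
    Coalgebra.comul (R := K) a * Coalgebra.comul (R := K) b

/-- `ε(abc) = ε(a b₍₁₎) ε(b₍₂₎ c)` for all `a b c`. -/
def LeftMonoidal : Prop :=
  ∀ a b c : A, Coalgebra.counit (R := K) (a * b * c) =
    pairCC K A ((a ⊗ₜ[K] (1 : A)) * Coalgebra.comul (R := K) b * ((1 : A) ⊗ₜ[K] c))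

/-- `ε(abc) = ε(a b₍₂₎) ε(b₍₁₎ c)` for all `a b c`. -/
def RightMonoidal : Prop :=
  ∀ a b c : A, Coalgebra.counit (R := K) (a * b * c) =
    pairCC K A ((a ⊗ₜ[K] (1 : A)) *
      (TensorProduct.comm K A A (Coalgebra.comul (R := K) b)) * ((1 : A) ⊗ₜ[K] c))

/-- `(Δ(1) ⊗ 1)(1 ⊗ Δ(1)) = (Δ ⊗ id)(Δ(1))`. -/
def LeftComonoidal : Prop :=
  ((Coalgebra.comul (R := K) (1 : A)) ⊗ₜ[K] (1 : A)) *
      ((TensorProduct.assoc K A A A).symm ((1 : A) ⊗ₜ[K] Coalgebra.comul (R := K) (1 : A))) =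
    LinearMap.rTensor A (Coalgebra.comul (R := K)) (Coalgebra.comul (R := K) (1 : A))

/-- `(1 ⊗ Δ(1))(Δ(1) ⊗ 1) = (Δ ⊗ id)(Δ(1))`. -/
def RightComonoidal : Prop :=
  ((TensorProduct.assoc K A A A).symm ((1 : A) ⊗ₜ[K] Coalgebra.comul (R := K) (1 : A))) *
      ((Coalgebra.comul (R := K) (1 : A)) ⊗ₜ[K] (1 : A)) =
    LinearMap.rTensor A (Coalgebra.comul (R := K)) (Coalgebra.comul (R := K) (1 : A))

/-- `N_LL(A) = {a | Δ(a) = a 1₍₁₎ ⊗ 1₍₂₎}`. -/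
def NLL : Set A :=
  {a : A | Coalgebra.comul (R := K) a =
    (a ⊗ₜ[K] (1 : A)) * Coalgebra.comul (R := K) (1 : A)}

/-- `N_LR(A) = {a | Δ(a) = 1₍₁₎ a ⊗ 1₍₂₎}`. -/
def NLR : Set A :=
  {a : A | Coalgebra.comul (R := K) a =
    Coalgebra.comul (R := K) (1 : A) * (a ⊗ₜ[K] (1 : A))}

/-- `N_RL(A) = {a | Δ(a) = 1₍₁₎ ⊗ a 1₍₂₎}`. -/
def NRL : Set A :=
  {a : A | Coalgebra.comul (R := K) a =
    ((1 : A) ⊗ₜ[K] a) * Coalgebra.comul (R := K) (1 : A)}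

/-- `N_RR(A) = {a | Δ(a) = 1₍₁₎ ⊗ 1₍₂₎ a}`. -/
def NRR : Set A :=
  {a : A | Coalgebra.comul (R := K) a =
    Coalgebra.comul (R := K) (1 : A) * ((1 : A) ⊗ₜ[K] a)}

/-- A subset which is a unital subalgebra. -/
def IsUnitalSub (S : Set A) : Prop :=
  (1 : A) ∈ S ∧ (∀ x ∈ S, ∀ y ∈ S, x * y ∈ S) ∧ (∀ x ∈ S, ∀ y ∈ S, x + y ∈ S) ∧
    ∀ (k : K), ∀ x ∈ S, k • x ∈ S

/-- `A_L = {φ(1₍₁₎) 1₍₂₎ : φ ∈ Â}`. -/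
def ALset : Set A :=
  {x : A | ∃ φ : A →ₗ[K] K,
    x = (TensorProduct.lid K A) (LinearMap.rTensor A φ (Coalgebra.comul (R := K) (1 : A)))}

/-- `A_R = {φ(1₍₂₎) 1₍₁₎ : φ ∈ Â}`. -/
def ARset : Set A :=
  {x : A | ∃ φ : A →ₗ[K] K,
    x = (TensorProduct.rid K A) (LinearMap.lTensor A φ (Coalgebra.comul (R := K) (1 : A)))}

theorem aux_eRR {a b : A} (ha : a = 1) :
    eRR K A b = conv K A LinearMap.id (epsUnit K A ∘ₗ LinearMap.mulRight K b) a := by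
  subst ha
  simp only [eRR, conv, LinearMap.comp_apply, inclR, TensorProduct.mk_apply,
    LinearMap.mulLeft_apply]
  generalize Coalgebra.comul (R := K) (1 : A) = t
  induction t with
  | zero => simp
  | add x y hx hy => simp only [add_mul, map_add, hx, hy]
  | tmul x y =>
    simp [epsUnit, Algebra.smul_def]
    rw [Algebra.commutes]

theorem aux_pair (a b : A) (t : A ⊗[K] A) :
    pairCC K A ((a ⊗ₜ[K] (1 : A)) * t * ((1 : A) ⊗ₜ[K] b)) =
      Coalgebra.counit (R := K) (a * (LinearMap.mul' K A (TensorProduct.map LinearMap.id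
        (epsUnit K A ∘ₗ LinearMap.mulRight K b) t))) := by
  induction t with
  | zero => simp
  | add x y hx hy => simp only [add_mul, mul_add, map_add, hx, hy]
  | tmul x y =>
    simp only [pairCC, epsUnit, LinearMap.comp_apply, Algebra.TensorProduct.tmul_mul_tmul,
      TensorProduct.map_tmul, LinearMap.mul'_apply, LinearMap.mulRight_apply,
      Algebra.linearMap_apply, LinearMap.id_apply, one_mul, mul_one, ← Algebra.commutes,
      ← Algebra.smul_def, mul_smul_comm, map_smul, LinearEquiv.coe_coe, TensorProduct.lid_tmul,
      smul_eq_mul]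
    ring

/-- `id ⊗ ε`. -/
def auxP : A ⊗[K] A →ₗ[K] A :=
  (TensorProduct.rid K A).toLinearMap ∘ₗ LinearMap.lTensor A (Coalgebra.counit (R := K) (A := A))

theorem auxP_tmul (x y : A) :
    auxP K A (x ⊗ₜ[K] y) = Coalgebra.counit (R := K) y • x := by
  simp [auxP]

theorem auxP_comul (x : A) : auxP K A (Coalgebra.comul (R := K) x) = x := by
  simp [auxP]

/-- `p ⊗ t ↦ x p · (ε ⊗ ε)((y ⊗ 1) t (1 ⊗ b))`. -/
def auxF (x y b : A) : A ⊗[K] (A ⊗[K] A) →ₗ[K] A :=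
  (TensorProduct.rid K A).toLinearMap ∘ₗ TensorProduct.map (LinearMap.mulLeft K x)
    (pairCC K A ∘ₗ LinearMap.mulRight K ((1 : A) ⊗ₜ[K] b) ∘ₗ
      LinearMap.mulLeft K (y ⊗ₜ[K] (1 : A)))

theorem auxF_tmul (x y b p : A) (t : A ⊗[K] A) :
    auxF K A x y b (p ⊗ₜ[K] t) =
      pairCC K A ((y ⊗ₜ[K] (1 : A)) * t * ((1 : A) ⊗ₜ[K] b)) • (x * p) := by
  simp [auxF]

theorem auxF_assoc (x y b q : A) (s : A ⊗[K] A) :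
    auxF K A x y b (TensorProduct.assoc K A A A (s ⊗ₜ[K] q)) =
      Coalgebra.counit (R := K) (q * b) • auxP K A ((x ⊗ₜ[K] y) * s) := by
  induction s with
  | zero => simp
  | add u v hu hv => simp only [TensorProduct.add_tmul, mul_add, map_add, smul_add, hu, hv]
  | tmul u v =>
    simp only [TensorProduct.assoc_tmul, auxF_tmul, Algebra.TensorProduct.tmul_mul_tmul, auxP_tmul]
    simp [pairCC, smul_smul, mul_comm]

theorem aux_conv (b : A) (t : A ⊗[K] A) :
    LinearMap.mul' K A (TensorProduct.map LinearMap.id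
        (epsUnit K A ∘ₗ LinearMap.mulRight K b) t) =
      auxP K A (t * ((1 : A) ⊗ₜ[K] b)) := by
  induction t with
  | zero => simp
  | add x y hx hy => simp only [add_mul, map_add, hx, hy]
  | tmul x y =>
    simp [epsUnit, auxP, Algebra.smul_def]
    rw [Algebra.commutes]

/-- `A` is left-monoidal iff `a ε_RR(b) = ε(a₍₂₎ b) a₍₁₎` for all `a b`. -/
theorem stmt1 [FiniteDimensional K A] (hΔ : WeakBialg K A) :
    LeftMonoidal K A ↔
      ∀ a b : A, a * eRR K A b =
        conv K A LinearMap.id (epsUnit K A ∘ₗ LinearMap.mulRight K b) a := by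
  constructor
  · intro h a b
    rw [aux_eRR K A (a := 1) rfl]
    simp only [conv, LinearMap.comp_apply, aux_conv]
    obtain ⟨S, hS⟩ := TensorProduct.exists_finset (Coalgebra.comul (R := K) a)
    obtain ⟨T, hT⟩ := TensorProduct.exists_finset (Coalgebra.comul (R := K) (1 : A))
    have hco := Coalgebra.coassoc_apply (R := K) (1 : A)
    have h1 : Coalgebra.comul (R := K) a =
        Coalgebra.comul (R := K) a * Coalgebra.comul (R := K) (1 : A) := by
      rw [← hΔ, mul_one]
    have key : ∀ x y : A, auxP K A ((x ⊗ₜ[K] y) * Coalgebra.comul (R := K) (1 : A) *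
          ((1 : A) ⊗ₜ[K] b)) =
        ∑ j ∈ T, Coalgebra.counit (R := K) (j.2 * b) •
          auxP K A ((x ⊗ₜ[K] y) * Coalgebra.comul (R := K) j.1) := by
      intro x y
      have := congrArg (auxF K A x y b) hco
      rw [hT] at this
      simp only [map_sum, LinearMap.rTensor_tmul, LinearMap.lTensor_tmul, auxF_assoc,
        auxF_tmul] at this
      rw [this, hT]
      simp only [Finset.mul_sum, Finset.sum_mul, map_sum, Algebra.TensorProduct.tmul_mul_tmul,
        auxP_tmul, mul_one]
      refine Finset.sum_congr rfl fun j _ => ?_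
      rw [h]
    rw [h1]
    conv_rhs => rw [hS]
    simp only [Finset.sum_mul, map_sum, key]
    rw [Finset.sum_comm]
    simp only [← Finset.smul_sum, ← map_sum, ← Finset.sum_mul]
    rw [← hS]
    simp only [← hΔ a, auxP_comul]
    rw [hT]
    simp only [Finset.mul_sum, Finset.sum_mul, map_sum, Algebra.TensorProduct.tmul_mul_tmul,
      auxP_tmul, mul_one, mul_smul_comm]
  · intro h a b c
    rw [aux_pair]
    have h2 := h b c
    have h3 := h (a * b) c
    simp only [conv, LinearMap.comp_apply] at h2 h3
    rw [← h2, ← mul_assoc, h3]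
    have := aux_pair K A 1 c (Coalgebra.comul (R := K) (a * b))
    rw [one_mul] at this
    rw [← this, ← Algebra.TensorProduct.one_def, one_mul]
    have e : ∀ t : A ⊗[K] A, pairCC K A (t * ((1 : A) ⊗ₜ[K] c)) =
        Coalgebra.counit (R := K) ((TensorProduct.lid K A
          (LinearMap.rTensor A (Coalgebra.counit (R := K)) t)) * c) := by
      intro t
      induction t with
      | zero => simp
      | add x y hx hy => simp only [add_mul, map_add, hx, hy]
      | tmul x y => simp [pairCC]
    rw [e]
    simp
end
end

section
/- A weak bialgebra A is left-monoidal (i.e. ε(abc) = ε(a b₍₁₎) ε(b₍₂₎ c) for all a, b, c) if and only if for all a in A: a₍₁₎ ⊗ ε_L(a₍₂₎) = a 1₍₁₎ ⊗ ε_L(1₍₂₎), where ε_L(b) ∈ Â is the functional x ↦ ε(b x). -/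
open TensorProduct

noncomputable section

variable (K A : Type*) [Field K] [Ring A] [Algebra K A] [Coalgebra K A]

/-- The map `x ⊗ y ↦ ε(y c) x`. -/
def auxE (c : A) : A ⊗[K] A →ₗ[K] A :=
  (TensorProduct.rid K A).toLinearMap ∘ₗ
    LinearMap.lTensor A ((Coalgebra.counit (R := K) (A := A)) ∘ₗ LinearMap.mulRight K c)

/-- For `P = p ⊗ q`, the map `(u ⊗ v) ⊗ w ↦ ε(q v) ε(w c) p u`. -/
def auxG (c : A) (P : A ⊗[K] A) : (A ⊗[K] A) ⊗[K] A →ₗ[K] A :=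
  (TensorProduct.rid K A).toLinearMap ∘ₗ
    TensorProduct.map
      ((TensorProduct.rid K A).toLinearMap ∘ₗ
        LinearMap.lTensor A (Coalgebra.counit (R := K) (A := A)) ∘ₗ LinearMap.mulLeft K P)
      ((Coalgebra.counit (R := K) (A := A)) ∘ₗ LinearMap.mulRight K c)

theorem auxE_tmul (c x y : A) :
    auxE K A c (x ⊗ₜ[K] y) = Coalgebra.counit (R := K) (y * c) • x := by
  simp [auxE]

theorem auxG_tmul (c : A) (P s : A ⊗[K] A) (y : A) :
    auxG K A c P (s ⊗ₜ[K] y) = Coalgebra.counit (R := K) (y * c) •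
      (TensorProduct.rid K A) (LinearMap.lTensor A (Coalgebra.counit (R := K) (A := A)) (P * s)) := by
  simp [auxG]

theorem auxG_left (hΔ : WeakBialg K A) (a c : A) (t : A ⊗[K] A) :
    auxG K A c (Coalgebra.comul (R := K) a)
      (LinearMap.rTensor A (Coalgebra.comul (R := K)) t) =
    auxE K A c ((a ⊗ₜ[K] (1 : A)) * t) := by
  induction t with
  | zero => simp
  | add x y hx hy => simp only [map_add, mul_add, hx, hy]
  | tmul x y =>
    rw [LinearMap.rTensor_tmul, auxG_tmul, ← hΔ, Coalgebra.lTensor_counit_comul,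
      Algebra.TensorProduct.tmul_mul_tmul, auxE_tmul]
    simp

theorem auxG_assoc (c u p q : A) (s : A ⊗[K] A) :
    auxG K A c (p ⊗ₜ[K] q) ((TensorProduct.assoc K A A A).symm (u ⊗ₜ[K] s)) =
    pairCC K A ((q ⊗ₜ[K] (1 : A)) * s * ((1 : A) ⊗ₜ[K] c)) • (p * u) := by
  induction s with
  | zero => simp
  | add x y hx hy =>
    simp only [TensorProduct.tmul_add, map_add, mul_add, add_mul, add_smul, hx, hy]
  | tmul v w =>
    rw [TensorProduct.assoc_symm_tmul, auxG_tmul]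
    simp [pairCC, smul_smul, mul_comm]

theorem auxG_add (c : A) (P Q : A ⊗[K] A) (z : (A ⊗[K] A) ⊗[K] A) :
    auxG K A c (P + Q) z = auxG K A c P z + auxG K A c Q z := by
  induction z with
  | zero => simp
  | add x y hx hy => rw [map_add, map_add, map_add, hx, hy]; abel
  | tmul s y => simp only [auxG_tmul, add_mul, map_add, smul_add]

theorem auxG_zero (c : A) (z : (A ⊗[K] A) ⊗[K] A) :
    auxG K A c 0 z = 0 := by
  have h := auxG_add K A c 0 0 z
  rw [add_zero] at h
  exact left_eq_add.mp h

theorem auxG_right (hL : LeftMonoidal K A) (c : A) (P t : A ⊗[K] A) :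
    auxG K A c P ((TensorProduct.assoc K A A A).symm
      (LinearMap.lTensor A (Coalgebra.comul (R := K)) t)) =
    auxE K A c (P * t) := by
  induction P with
  | zero => rw [auxG_zero]; simp
  | add x y hx hy => rw [auxG_add, hx, hy, add_mul, map_add]
  | tmul p q =>
    induction t with
    | zero => simp
    | add x y hx hy => simp only [map_add, mul_add, hx, hy]
    | tmul x y =>
      rw [LinearMap.lTensor_tmul, auxG_assoc, ← hL, Algebra.TensorProduct.tmul_mul_tmul,
        auxE_tmul]

theorem auxE_eval (c : A) (t : A ⊗[K] A) :
    (dualTensorHom K A A) (TensorProduct.comm K A (A →ₗ[K] K)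
      (LinearMap.lTensor A (epsLfun K A) t)) c = auxE K A c t := by
  induction t with
  | zero => simp
  | add x y hx hy => simp only [map_add, LinearMap.add_apply, hx, hy]
  | tmul x y =>
    rw [auxE_tmul, LinearMap.lTensor_tmul, TensorProduct.comm_tmul]
    exact dualTensorHom_apply _ _ _

theorem auxE_iff [FiniteDimensional K A] (s t : A ⊗[K] A) :
    LinearMap.lTensor A (epsLfun K A) s = LinearMap.lTensor A (epsLfun K A) t ↔
      ∀ c, auxE K A c s = auxE K A c t := by
  constructor
  · intro h c
    rw [← auxE_eval, h, auxE_eval]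
  · intro h
    apply (TensorProduct.comm K A (A →ₗ[K] K)).injective
    apply (dualTensorHomEquiv K A A).injective
    apply LinearMap.ext
    intro c
    have := h c
    rw [← auxE_eval, ← auxE_eval] at this
    simpa using this

theorem auxE_counit (a c : A) (t : A ⊗[K] A) :
    Coalgebra.counit (R := K) (a * auxE K A c t) =
      pairCC K A ((a ⊗ₜ[K] (1 : A)) * t * ((1 : A) ⊗ₜ[K] c)) := by
  induction t with
  | zero => simp
  | add x y hx hy => simp only [map_add, mul_add, add_mul, hx, hy]
  | tmul x y =>
    rw [auxE_tmul]
    simp [pairCC, mul_comm]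

theorem auxE_mul (a c : A) (t : A ⊗[K] A) :
    auxE K A c ((a ⊗ₜ[K] (1 : A)) * t) = a * auxE K A c t := by
  induction t with
  | zero => simp
  | add x y hx hy => simp only [map_add, mul_add, hx, hy]
  | tmul x y => simp [auxE_tmul]

theorem auxE_comul_counit (a c : A) :
    Coalgebra.counit (R := K) (auxE K A c (Coalgebra.comul (R := K) a)) =
      Coalgebra.counit (R := K) (a * c) := by
  have key : ∀ t : A ⊗[K] A, Coalgebra.counit (R := K) (auxE K A c t) =
      Coalgebra.counit (R := K) ((TensorProduct.lid K A)
        (LinearMap.rTensor A (Coalgebra.counit (R := K) (A := A)) t) * c) := by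
    intro t
    induction t with
    | zero => simp
    | add x y hx hy => simp only [map_add, add_mul, hx, hy]
    | tmul x y => simp [auxE_tmul, mul_comm]
  rw [key, Coalgebra.rTensor_counit_comul]
  simp

/-- `A` is left-monoidal iff
`a₍₁₎ ⊗ ε_L(a₍₂₎) = a 1₍₁₎ ⊗ ε_L(1₍₂₎)` for all `a`. -/
theorem stmt2 [FiniteDimensional K A] (hΔ : WeakBialg K A) :
    LeftMonoidal K A ↔
      ∀ a : A,
        LinearMap.lTensor A (epsLfun K A) (Coalgebra.comul (R := K) a) =
        LinearMap.lTensor A (epsLfun K A)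
          ((a ⊗ₜ[K] (1 : A)) * Coalgebra.comul (R := K) (1 : A)) := by
  simp only [auxE_iff]
  constructor
  · intro hL a c
    rw [← auxG_left K A hΔ, ← Coalgebra.coassoc_symm_apply, auxG_right K A hL, ← hΔ, mul_one]
  · intro h a b c
    rw [← auxE_counit, h, auxE_mul, ← mul_assoc, ← auxE_mul, ← h, auxE_comul_counit]
end
end

section
/- If a weak bialgebra A is both left-monoidal and right-monoidal, then the images of ε_LL and ε_RL commute element-wise: [ε_LL(A), ε_RL(A)] = 0, and likewise [ε_LR(A), ε_RR(A)] = 0. -/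
open TensorProduct

noncomputable section

variable (K A : Type*) [Field K] [Ring A] [Algebra K A] [Coalgebra K A]

open TensorProduct

/-- `b ↦ φ(b₁) b₂`. -/
def actL {K A : Type*} [Field K] [Ring A] [Algebra K A] [Coalgebra K A]
    (φ : A →ₗ[K] K) : A →ₗ[K] A :=
  (TensorProduct.lid K A).toLinearMap ∘ₗ LinearMap.rTensor A φ ∘ₗ Coalgebra.comul (R := K)

/-- `b ↦ b₁ φ(b₂)`. -/
def actR {K A : Type*} [Field K] [Ring A] [Algebra K A] [Coalgebra K A]
    (φ : A →ₗ[K] K) : A →ₗ[K] A :=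
  (TensorProduct.rid K A).toLinearMap ∘ₗ LinearMap.lTensor A φ ∘ₗ Coalgebra.comul (R := K)

section helpers
variable {K A : Type*} [Field K] [Ring A] [Algebra K A] [Coalgebra K A]

theorem actL_counit (b : A) : actL (Coalgebra.counit (R := K) (A := A)) b = b := by
  simp [actL]

theorem actR_counit (b : A) : actR (Coalgebra.counit (R := K) (A := A)) b = b := by
  simp [actR]

theorem comul_actL (φ : A →ₗ[K] K) (b : A) :
    Coalgebra.comul (R := K) (actL φ b) =
      LinearMap.rTensor A (actL φ) (Coalgebra.comul (R := K) b) := by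
  have key : ∀ z : A ⊗[K] A, Coalgebra.comul (R := K) (TensorProduct.lid K A (LinearMap.rTensor A φ z))
      = TensorProduct.lid K (A ⊗[K] A) (LinearMap.rTensor (A ⊗[K] A) φ
        (LinearMap.lTensor A (Coalgebra.comul (R := K)) z)) := by
    intro z
    induction z with
    | zero => simp
    | tmul x y => simp
    | add x y hx hy => simp only [map_add, hx, hy]
  have key2 : ∀ w : (A ⊗[K] A) ⊗[K] A, TensorProduct.lid K (A ⊗[K] A)
      (LinearMap.rTensor (A ⊗[K] A) φ (TensorProduct.assoc K A A A w)) =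
      LinearMap.rTensor A ((TensorProduct.lid K A).toLinearMap ∘ₗ LinearMap.rTensor A φ) w := by
    intro w
    induction w with
    | zero => simp
    | tmul x y =>
      induction x with
      | zero => simp
      | tmul p q => simp [TensorProduct.smul_tmul']
      | add x y hx hy => simp only [map_add, hx, hy, TensorProduct.add_tmul]
    | add x y hx hy => simp only [map_add, hx, hy]
  have h := key (Coalgebra.comul (R := K) b)
  rw [← Coalgebra.coassoc_apply, key2, ← LinearMap.rTensor_comp_apply] at h
  exact h

theorem comul_actR (φ : A →ₗ[K] K) (b : A) :
    Coalgebra.comul (R := K) (actR φ b) =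
      LinearMap.lTensor A (actR φ) (Coalgebra.comul (R := K) b) := by
  have key : ∀ z : A ⊗[K] A, Coalgebra.comul (R := K) (TensorProduct.rid K A (LinearMap.lTensor A φ z))
      = TensorProduct.rid K (A ⊗[K] A) (LinearMap.lTensor (A ⊗[K] A) φ
        (LinearMap.rTensor A (Coalgebra.comul (R := K)) z)) := by
    intro z
    induction z with
    | zero => simp
    | tmul x y => simp
    | add x y hx hy => simp only [map_add, hx, hy]
  have key2 : ∀ w : A ⊗[K] (A ⊗[K] A), TensorProduct.rid K (A ⊗[K] A)
      (LinearMap.lTensor (A ⊗[K] A) φ ((TensorProduct.assoc K A A A).symm w)) =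
      LinearMap.lTensor A ((TensorProduct.rid K A).toLinearMap ∘ₗ LinearMap.lTensor A φ) w := by
    intro w
    induction w with
    | zero => simp
    | tmul y x =>
      induction x with
      | zero => simp
      | tmul p q => simp
      | add x y hx hy => simp only [map_add, hx, hy, TensorProduct.tmul_add]
    | add x y hx hy => simp only [map_add, hx, hy]
  have h := key (Coalgebra.comul (R := K) b)
  rw [← Coalgebra.coassoc_symm_apply, key2, ← LinearMap.lTensor_comp_apply] at h
  exact h

theorem actL_actR (φ ψ : A →ₗ[K] K) (b : A) : actL φ (actR ψ b) = actR ψ (actL φ b) := by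
  have key : ∀ z : A ⊗[K] A, TensorProduct.lid K A (LinearMap.rTensor A φ
      (LinearMap.lTensor A (actR ψ) z)) =
      actR ψ (TensorProduct.lid K A (LinearMap.rTensor A φ z)) := by
    intro z
    induction z with
    | zero => simp
    | tmul x y => simp
    | add x y hx hy => simp only [map_add, hx, hy]
  have h := key (Coalgebra.comul (R := K) b)
  rw [← comul_actR] at h
  exact h

theorem actL_left (hΔ : WeakBialg K A) (φ : A →ₗ[K] K)
    (h : ∀ u v : A, φ (u * v) = Coalgebra.counit (R := K) (actL φ u * v)) (b : A) :
    actL φ b = actL φ 1 * b := by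
  have key : ∀ z w : A ⊗[K] A, TensorProduct.lid K A (LinearMap.rTensor A φ (z * w)) =
      TensorProduct.lid K A (LinearMap.rTensor A (Coalgebra.counit (R := K) (A := A))
        (LinearMap.rTensor A (actL φ) z * w)) := by
    intro z w
    induction z with
    | zero => simp
    | add x y hx hy => simp only [map_add, hx, hy, add_mul]
    | tmul x y =>
      induction w with
      | zero => simp
      | add x y hx hy => simp only [map_add, hx, hy, mul_add]
      | tmul p q => simp [h]
  have h1 := key (Coalgebra.comul (R := K) (1 : A)) (Coalgebra.comul (R := K) (b : A))
  rw [← hΔ, ← comul_actL, ← hΔ, one_mul] at h1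
  have h2 := actL_counit (K := K) (actL φ 1 * b)
  exact h1.trans h2

theorem actR_left (hΔ : WeakBialg K A) (φ : A →ₗ[K] K)
    (h : ∀ u v : A, φ (u * v) = Coalgebra.counit (R := K) (actR φ u * v)) (b : A) :
    actR φ b = actR φ 1 * b := by
  have key : ∀ z w : A ⊗[K] A, TensorProduct.rid K A (LinearMap.lTensor A φ (z * w)) =
      TensorProduct.rid K A (LinearMap.lTensor A (Coalgebra.counit (R := K) (A := A))
        (LinearMap.lTensor A (actR φ) z * w)) := by
    intro z w
    induction z with
    | zero => simp
    | add x y hx hy => simp only [map_add, hx, hy, add_mul]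
    | tmul x y =>
      induction w with
      | zero => simp
      | add x y hx hy => simp only [map_add, hx, hy, mul_add]
      | tmul p q => simp [h]
  have h1 := key (Coalgebra.comul (R := K) (1 : A)) (Coalgebra.comul (R := K) (b : A))
  rw [← hΔ, ← comul_actR, ← hΔ, one_mul] at h1
  have h2 := actR_counit (K := K) (actR φ 1 * b)
  exact h1.trans h2

theorem actL_right (hΔ : WeakBialg K A) (φ : A →ₗ[K] K)
    (h : ∀ u v : A, φ (u * v) = Coalgebra.counit (R := K) (u * actL φ v)) (b : A) :
    actL φ b = b * actL φ 1 := by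
  have key : ∀ z w : A ⊗[K] A, TensorProduct.lid K A (LinearMap.rTensor A φ (z * w)) =
      TensorProduct.lid K A (LinearMap.rTensor A (Coalgebra.counit (R := K) (A := A))
        (z * LinearMap.rTensor A (actL φ) w)) := by
    intro z w
    induction z with
    | zero => simp
    | add x y hx hy => simp only [map_add, hx, hy, add_mul]
    | tmul x y =>
      induction w with
      | zero => simp
      | add x y hx hy => simp only [map_add, hx, hy, mul_add]
      | tmul p q => simp [h]
  have h1 := key (Coalgebra.comul (R := K) (b : A)) (Coalgebra.comul (R := K) (1 : A))
  rw [← hΔ, ← comul_actL, ← hΔ, mul_one] at h1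
  have h2 := actL_counit (K := K) (b * actL φ 1)
  exact h1.trans h2

theorem actR_right (hΔ : WeakBialg K A) (φ : A →ₗ[K] K)
    (h : ∀ u v : A, φ (u * v) = Coalgebra.counit (R := K) (u * actR φ v)) (b : A) :
    actR φ b = b * actR φ 1 := by
  have key : ∀ z w : A ⊗[K] A, TensorProduct.rid K A (LinearMap.lTensor A φ (z * w)) =
      TensorProduct.rid K A (LinearMap.lTensor A (Coalgebra.counit (R := K) (A := A))
        (z * LinearMap.lTensor A (actR φ) w)) := by
    intro z w
    induction z with
    | zero => simp
    | add x y hx hy => simp only [map_add, hx, hy, add_mul]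
    | tmul x y =>
      induction w with
      | zero => simp
      | add x y hx hy => simp only [map_add, hx, hy, mul_add]
      | tmul p q => simp [h]
  have h1 := key (Coalgebra.comul (R := K) (b : A)) (Coalgebra.comul (R := K) (1 : A))
  rw [← hΔ, ← comul_actR, ← hΔ, mul_one] at h1
  have h2 := actR_counit (K := K) (b * actR φ 1)
  exact h1.trans h2

theorem eLL_eq (a : A) :
    eLL K A a = actL (Coalgebra.counit (R := K) ∘ₗ LinearMap.mulLeft K a) 1 := by
  have key : ∀ z : A ⊗[K] A, TensorProduct.lid K A (LinearMap.rTensor A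
      (Coalgebra.counit (R := K) (A := A)) ((a ⊗ₜ 1) * z)) = TensorProduct.lid K A
      (LinearMap.rTensor A (Coalgebra.counit (R := K) ∘ₗ LinearMap.mulLeft K a) z) := by
    intro z
    induction z with
    | zero => simp
    | tmul x y => simp
    | add x y hx hy => simp only [map_add, hx, hy, mul_add]
  exact key _

theorem eLR_eq (a : A) :
    eLR K A a = actL (Coalgebra.counit (R := K) ∘ₗ LinearMap.mulRight K a) 1 := by
  have key : ∀ z : A ⊗[K] A, TensorProduct.lid K A (LinearMap.rTensor A
      (Coalgebra.counit (R := K) (A := A)) (z * (a ⊗ₜ 1))) = TensorProduct.lid K A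
      (LinearMap.rTensor A (Coalgebra.counit (R := K) ∘ₗ LinearMap.mulRight K a) z) := by
    intro z
    induction z with
    | zero => simp
    | tmul x y => simp
    | add x y hx hy => simp only [map_add, hx, hy, add_mul]
  exact key _

theorem eRL_eq (a : A) :
    eRL K A a = actR (Coalgebra.counit (R := K) ∘ₗ LinearMap.mulLeft K a) 1 := by
  have key : ∀ z : A ⊗[K] A, TensorProduct.rid K A (LinearMap.lTensor A
      (Coalgebra.counit (R := K) (A := A)) ((1 ⊗ₜ a) * z)) = TensorProduct.rid K A
      (LinearMap.lTensor A (Coalgebra.counit (R := K) ∘ₗ LinearMap.mulLeft K a) z) := by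
    intro z
    induction z with
    | zero => simp
    | tmul x y => simp
    | add x y hx hy => simp only [map_add, hx, hy, mul_add]
  exact key _

theorem eRR_eq (a : A) :
    eRR K A a = actR (Coalgebra.counit (R := K) ∘ₗ LinearMap.mulRight K a) 1 := by
  have key : ∀ z : A ⊗[K] A, TensorProduct.rid K A (LinearMap.lTensor A
      (Coalgebra.counit (R := K) (A := A)) (z * (1 ⊗ₜ a))) = TensorProduct.rid K A
      (LinearMap.lTensor A (Coalgebra.counit (R := K) ∘ₗ LinearMap.mulRight K a) z) := by
    intro z
    induction z with
    | zero => simp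
    | tmul x y => simp
    | add x y hx hy => simp only [map_add, hx, hy, add_mul]
  exact key _

theorem pair_left (a c : A) (z : A ⊗[K] A) :
    pairCC K A ((a ⊗ₜ[K] (1 : A)) * z * ((1 : A) ⊗ₜ[K] c)) =
      Coalgebra.counit (R := K) (TensorProduct.lid K A (LinearMap.rTensor A
        (Coalgebra.counit (R := K) ∘ₗ LinearMap.mulLeft K a) z) * c) ∧
    pairCC K A ((a ⊗ₜ[K] (1 : A)) * z * ((1 : A) ⊗ₜ[K] c)) =
      Coalgebra.counit (R := K) (a * TensorProduct.rid K A (LinearMap.lTensor A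
        (Coalgebra.counit (R := K) ∘ₗ LinearMap.mulRight K c) z)) := by
  induction z with
  | zero => simp
  | tmul x y => simp [pairCC, mul_comm]
  | add x y hx hy =>
    simp only [map_add, mul_add, add_mul]
    exact ⟨by rw [hx.1, hy.1], by rw [hx.2, hy.2]⟩

theorem pair_right (a c : A) (z : A ⊗[K] A) :
    pairCC K A ((a ⊗ₜ[K] (1 : A)) * TensorProduct.comm K A A z * ((1 : A) ⊗ₜ[K] c)) =
      Coalgebra.counit (R := K) (TensorProduct.rid K A (LinearMap.lTensor A
        (Coalgebra.counit (R := K) ∘ₗ LinearMap.mulLeft K a) z) * c) ∧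
    pairCC K A ((a ⊗ₜ[K] (1 : A)) * TensorProduct.comm K A A z * ((1 : A) ⊗ₜ[K] c)) =
      Coalgebra.counit (R := K) (a * TensorProduct.lid K A (LinearMap.rTensor A
        (Coalgebra.counit (R := K) ∘ₗ LinearMap.mulRight K c) z)) := by
  induction z with
  | zero => simp
  | tmul x y => simp [pairCC, mul_comm]
  | add x y hx hy =>
    simp only [map_add, mul_add, add_mul]
    exact ⟨by rw [hx.1, hy.1], by rw [hx.2, hy.2]⟩

end helpers

/-- if `A` is left- and right-monoidal then
`[ε_LL(A), ε_RL(A)] = 0` and `[ε_LR(A), ε_RR(A)] = 0`. -/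
theorem stmt5 [FiniteDimensional K A] (hΔ : WeakBialg K A)
    (hL : LeftMonoidal K A) (hR : RightMonoidal K A) :
    (∀ a b : A, eLL K A a * eRL K A b = eRL K A b * eLL K A a) ∧
    (∀ a b : A, eLR K A a * eRR K A b = eRR K A b * eLR K A a) := by
  refine ⟨fun a b => ?_, fun a b => ?_⟩
  · rw [eLL_eq, eRL_eq]
    rw [← actL_left hΔ, ← actR_left hΔ, actL_actR]
    · intro u v
      have h := hR b u v
      rw [(pair_right b v _).1, ] at h
      exact (congrArg _ (mul_assoc b u v).symm).trans h
    · intro u v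
      have h := hL a u v
      rw [(pair_left a v _).1] at h
      exact (congrArg _ (mul_assoc a u v).symm).trans h
  · rw [eLR_eq, eRR_eq]
    rw [← actR_right hΔ, ← actL_right hΔ, actL_actR]
    · intro u v
      have h := hR u v a
      rw [(pair_right u a _).2] at h
      exact h
    · intro u v
      have h := hL u v b
      rw [(pair_left u b _).2] at h
      exact h
end
end

section
/- Let A be a weak bialgebra and define N_LL(A) = {a ∈ A : Δ(a) = a 1₍₁₎ ⊗ 1₍₂₎}. Then a ∈ N_LL(A) if and only if ab = ε(a b₍₁₎) b₍₂₎ for all b ∈ A. -/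
open TensorProduct

noncomputable section

variable (K A : Type*) [Field K] [Ring A] [Algebra K A] [Coalgebra K A]

theorem conv_eq_aux (a b : A) :
    conv K A (epsUnit K A ∘ₗ LinearMap.mulLeft K a) LinearMap.id b =
      TensorProduct.lid K A (LinearMap.rTensor A
        (Coalgebra.counit (R := K) (A := A) ∘ₗ LinearMap.mulLeft K a)
        (Coalgebra.comul (R := K) b)) := by
  simp only [conv, LinearMap.comp_apply]
  generalize Coalgebra.comul (R := K) b = t
  induction t using TensorProduct.induction_on with
  | zero => simp
  | tmul x y => simp [epsUnit, Algebra.smul_def]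
  | add x y hx hy => simp only [map_add, hx, hy]

theorem mul_aux (a : A) (t : A ⊗[K] A) :
    (a ⊗ₜ[K] (1 : A)) * t = LinearMap.rTensor A (LinearMap.mulLeft K a) t := by
  induction t using TensorProduct.induction_on with
  | zero => simp
  | tmul x y => simp
  | add x y hx hy => simp only [map_add, mul_add, hx, hy]

theorem comul_lid_aux (φ : A →ₗ[K] K) (t : A ⊗[K] A) :
    Coalgebra.comul (R := K) (TensorProduct.lid K A (LinearMap.rTensor A φ t)) =
      TensorProduct.lid K (A ⊗[K] A) (LinearMap.rTensor (A ⊗[K] A) φ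
        (LinearMap.lTensor A (Coalgebra.comul (R := K)) t)) := by
  induction t using TensorProduct.induction_on with
  | zero => simp
  | tmul x y => simp
  | add x y hx hy => simp only [map_add, hx, hy]

theorem assoc_aux (φ : A →ₗ[K] K) (t : (A ⊗[K] A) ⊗[K] A) :
    TensorProduct.lid K (A ⊗[K] A) (LinearMap.rTensor (A ⊗[K] A) φ
        (TensorProduct.assoc K A A A t)) =
      LinearMap.rTensor A ((TensorProduct.lid K A).toLinearMap ∘ₗ LinearMap.rTensor A φ) t := by
  induction t using TensorProduct.induction_on with
  | zero => simp
  | tmul x y =>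
    induction x using TensorProduct.induction_on with
    | zero => simp
    | tmul x z => simp [TensorProduct.smul_tmul']
    | add x y hx hy => simp only [map_add, TensorProduct.add_tmul, hx, hy]
  | add x y hx hy => simp only [map_add, hx, hy]

/-- `a ∈ N_LL(A)` iff `ab = ε(a b₍₁₎) b₍₂₎` for all `b`. -/
theorem stmt7 [FiniteDimensional K A] (hΔ : WeakBialg K A) (a : A) :
    a ∈ NLL K A ↔
      ∀ b : A, a * b =
        conv K A (epsUnit K A ∘ₗ LinearMap.mulLeft K a) LinearMap.id b := by
  simp only [conv_eq_aux]
  constructor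
  · intro h b
    have h : Coalgebra.comul (R := K) a =
      (a ⊗ₜ[K] (1 : A)) * Coalgebra.comul (R := K) (1 : A) := h
    have h2 : Coalgebra.comul (R := K) (a * b) =
        LinearMap.rTensor A (LinearMap.mulLeft K a) (Coalgebra.comul (R := K) b) := by
      rw [hΔ, h, mul_assoc, ← hΔ, one_mul, mul_aux]
    rw [LinearMap.rTensor_comp_apply, ← h2, Coalgebra.rTensor_counit_comul]
    simp
  · intro h
    change Coalgebra.comul (R := K) a =
      (a ⊗ₜ[K] (1 : A)) * Coalgebra.comul (R := K) (1 : A)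
    have h1 := h 1
    rw [mul_one] at h1
    conv_lhs => rw [h1]
    rw [comul_lid_aux, ← Coalgebra.coassoc_apply, assoc_aux, mul_aux,
      ← LinearMap.rTensor_comp_apply]
    congr 2
    ext b
    simpa using (h b).symm
end
end

section
/- In a weak bialgebra A, each set N_LL(A) = {a : Δ(a) = a 1₍₁₎ ⊗ 1₍₂₎}, N_LR(A) = {a : Δ(a) = 1₍₁₎ a ⊗ 1₍₂₎}, N_RL(A) = {a : Δ(a) = 1₍₁₎ ⊗ a 1₍₂₎}, N_RR(A) = {a : Δ(a) = 1₍₁₎ ⊗ 1₍₂₎ a} is a unital subalgebra of A, and moreover N_LL(A) commutes element-wise with N_RL(A), and N_LR(A) commutes with N_RR(A). -/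
open TensorProduct

noncomputable section

variable (K A : Type*) [Field K] [Ring A] [Algebra K A] [Coalgebra K A]

theorem comul_inj_aux {a b : A}
    (h : Coalgebra.comul (R := K) a = Coalgebra.comul (R := K) b) : a = b := by
  have h2 := congrArg (LinearMap.rTensor A (Coalgebra.counit (R := K) (A := A))) h
  rw [Coalgebra.rTensor_counit_comul, Coalgebra.rTensor_counit_comul] at h2
  simpa using congrArg (TensorProduct.lid K A) h2

/-- the sets `N_LL, N_LR, N_RL, N_RR` are unital subalgebras,
`N_LL` commutes with `N_RL` and `N_LR` commutes with `N_RR`. -/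
theorem stmt8 [FiniteDimensional K A] (hΔ : WeakBialg K A) :
    IsUnitalSub K A (NLL K A) ∧ IsUnitalSub K A (NLR K A) ∧
    IsUnitalSub K A (NRL K A) ∧ IsUnitalSub K A (NRR K A) ∧
    (∀ x ∈ NLL K A, ∀ y ∈ NRL K A, x * y = y * x) ∧
    (∀ x ∈ NLR K A, ∀ y ∈ NRR K A, x * y = y * x) := by
  have hl : ∀ a : A, Coalgebra.comul (R := K) (1 : A) * Coalgebra.comul (R := K) a =
      Coalgebra.comul (R := K) a := fun a => by rw [← hΔ, one_mul]
  have hr : ∀ a : A, Coalgebra.comul (R := K) a * Coalgebra.comul (R := K) (1 : A) =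
      Coalgebra.comul (R := K) a := fun a => by rw [← hΔ, mul_one]
  -- products with a factor in one of the four sets
  have mLL : ∀ x ∈ NLL K A, ∀ y : A, Coalgebra.comul (R := K) (x * y) =
      (x ⊗ₜ[K] (1 : A)) * Coalgebra.comul (R := K) y := fun x hx y => by
    rw [hΔ, show Coalgebra.comul (R := K) x = _ from hx, mul_assoc, hl]
  have mRL : ∀ x ∈ NRL K A, ∀ y : A, Coalgebra.comul (R := K) (x * y) =
      ((1 : A) ⊗ₜ[K] x) * Coalgebra.comul (R := K) y := fun x hx y => by
    rw [hΔ, show Coalgebra.comul (R := K) x = _ from hx, mul_assoc, hl]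
  have mLR : ∀ y ∈ NLR K A, ∀ x : A, Coalgebra.comul (R := K) (x * y) =
      Coalgebra.comul (R := K) x * (y ⊗ₜ[K] (1 : A)) := fun y hy x => by
    rw [hΔ, show Coalgebra.comul (R := K) y = _ from hy, ← mul_assoc, hr]
  have mRR : ∀ y ∈ NRR K A, ∀ x : A, Coalgebra.comul (R := K) (x * y) =
      Coalgebra.comul (R := K) x * ((1 : A) ⊗ₜ[K] y) := fun y hy x => by
    rw [hΔ, show Coalgebra.comul (R := K) y = _ from hy, ← mul_assoc, hr]
  refine ⟨⟨?_, ?_, ?_, ?_⟩, ⟨?_, ?_, ?_, ?_⟩, ⟨?_, ?_, ?_, ?_⟩, ⟨?_, ?_, ?_, ?_⟩, ?_, ?_⟩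
  · change Coalgebra.comul (R := K) (1 : A) = ((1 : A) ⊗ₜ[K] (1 : A)) * Coalgebra.comul (R := K) (1 : A)
    rw [← Algebra.TensorProduct.one_def, one_mul]
  · intro x hx y hy
    change Coalgebra.comul (R := K) (x * y) = ((x * y) ⊗ₜ[K] (1 : A)) * Coalgebra.comul (R := K) (1 : A)
    rw [mLL x hx y, show Coalgebra.comul (R := K) y = _ from hy, ← mul_assoc,
      Algebra.TensorProduct.tmul_mul_tmul, mul_one]
  · intro x hx y hy
    change Coalgebra.comul (R := K) (x + y) = ((x + y) ⊗ₜ[K] (1 : A)) * Coalgebra.comul (R := K) (1 : A)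
    rw [map_add, show Coalgebra.comul (R := K) x = _ from hx,
      show Coalgebra.comul (R := K) y = _ from hy, TensorProduct.add_tmul, add_mul]
  · intro k x hx
    change Coalgebra.comul (R := K) (k • x) = ((k • x) ⊗ₜ[K] (1 : A)) * Coalgebra.comul (R := K) (1 : A)
    rw [map_smul, show Coalgebra.comul (R := K) x = _ from hx, ← TensorProduct.smul_tmul', smul_mul_assoc]
  · change Coalgebra.comul (R := K) (1 : A) = Coalgebra.comul (R := K) (1 : A) * ((1 : A) ⊗ₜ[K] (1 : A))
    rw [← Algebra.TensorProduct.one_def, mul_one]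
  · intro x hx y hy
    change Coalgebra.comul (R := K) (x * y) = Coalgebra.comul (R := K) (1 : A) * ((x * y) ⊗ₜ[K] (1 : A))
    rw [mLR y hy x, show Coalgebra.comul (R := K) x = _ from hx, mul_assoc,
      Algebra.TensorProduct.tmul_mul_tmul, mul_one]
  · intro x hx y hy
    change Coalgebra.comul (R := K) (x + y) = Coalgebra.comul (R := K) (1 : A) * ((x + y) ⊗ₜ[K] (1 : A))
    rw [map_add, show Coalgebra.comul (R := K) x = _ from hx,
      show Coalgebra.comul (R := K) y = _ from hy, TensorProduct.add_tmul, mul_add]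
  · intro k x hx
    change Coalgebra.comul (R := K) (k • x) = Coalgebra.comul (R := K) (1 : A) * ((k • x) ⊗ₜ[K] (1 : A))
    rw [map_smul, show Coalgebra.comul (R := K) x = _ from hx, ← TensorProduct.smul_tmul', mul_smul_comm]
  · change Coalgebra.comul (R := K) (1 : A) = ((1 : A) ⊗ₜ[K] (1 : A)) * Coalgebra.comul (R := K) (1 : A)
    rw [← Algebra.TensorProduct.one_def, one_mul]
  · intro x hx y hy
    change Coalgebra.comul (R := K) (x * y) = ((1 : A) ⊗ₜ[K] (x * y)) * Coalgebra.comul (R := K) (1 : A)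
    rw [mRL x hx y, show Coalgebra.comul (R := K) y = _ from hy, ← mul_assoc,
      Algebra.TensorProduct.tmul_mul_tmul, mul_one]
  · intro x hx y hy
    change Coalgebra.comul (R := K) (x + y) = ((1 : A) ⊗ₜ[K] (x + y)) * Coalgebra.comul (R := K) (1 : A)
    rw [map_add, show Coalgebra.comul (R := K) x = _ from hx,
      show Coalgebra.comul (R := K) y = _ from hy, TensorProduct.tmul_add, add_mul]
  · intro k x hx
    change Coalgebra.comul (R := K) (k • x) = ((1 : A) ⊗ₜ[K] (k • x)) * Coalgebra.comul (R := K) (1 : A)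
    rw [map_smul, show Coalgebra.comul (R := K) x = _ from hx, TensorProduct.tmul_smul, smul_mul_assoc]
  · change Coalgebra.comul (R := K) (1 : A) = Coalgebra.comul (R := K) (1 : A) * ((1 : A) ⊗ₜ[K] (1 : A))
    rw [← Algebra.TensorProduct.one_def, mul_one]
  · intro x hx y hy
    change Coalgebra.comul (R := K) (x * y) = Coalgebra.comul (R := K) (1 : A) * ((1 : A) ⊗ₜ[K] (x * y))
    rw [mRR y hy x, show Coalgebra.comul (R := K) x = _ from hx, mul_assoc,
      Algebra.TensorProduct.tmul_mul_tmul, mul_one]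
  · intro x hx y hy
    change Coalgebra.comul (R := K) (x + y) = Coalgebra.comul (R := K) (1 : A) * ((1 : A) ⊗ₜ[K] (x + y))
    rw [map_add, show Coalgebra.comul (R := K) x = _ from hx,
      show Coalgebra.comul (R := K) y = _ from hy, TensorProduct.tmul_add, mul_add]
  · intro k x hx
    change Coalgebra.comul (R := K) (k • x) = Coalgebra.comul (R := K) (1 : A) * ((1 : A) ⊗ₜ[K] (k • x))
    rw [map_smul, show Coalgebra.comul (R := K) x = _ from hx, TensorProduct.tmul_smul, mul_smul_comm]
  · intro x hx y hy
    apply comul_inj_aux K A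
    rw [mLL x hx, mRL y hy, show Coalgebra.comul (R := K) x = _ from hx,
      show Coalgebra.comul (R := K) y = _ from hy, ← mul_assoc, ← mul_assoc,
      Algebra.TensorProduct.tmul_mul_tmul, Algebra.TensorProduct.tmul_mul_tmul]
    simp
  · intro x hx y hy
    apply comul_inj_aux K A
    rw [mRR y hy, mLR x hx, show Coalgebra.comul (R := K) x = _ from hx,
      show Coalgebra.comul (R := K) y = _ from hy, mul_assoc, mul_assoc,
      Algebra.TensorProduct.tmul_mul_tmul, Algebra.TensorProduct.tmul_mul_tmul]
    simp
end
end

section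
/- A weak bialgebra A is left-comonoidal, i.e. (Δ(1) ⊗ 1)(1 ⊗ Δ(1)) = (Δ ⊗ id)(Δ(1)), if and only if A_L := {φ(1₍₁₎) 1₍₂₎ : φ ∈ Â} equals N_LL(A) = {a : Δ(a) = a 1₍₁₎ ⊗ 1₍₂₎}. -/
open TensorProduct

noncomputable section

variable (K A : Type*) [Field K] [Ring A] [Algebra K A] [Coalgebra K A]

theorem aux_sep {K A B : Type*} [Field K] [AddCommGroup A] [Module K A] [AddCommGroup B]
    [Module K B] (s t : A ⊗[K] B)
    (h : ∀ φ : A →ₗ[K] K, TensorProduct.lid K B (LinearMap.rTensor B φ s) =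
      TensorProduct.lid K B (LinearMap.rTensor B φ t)) : s = t := by
  classical
  let b := Module.Free.chooseBasis K A
  apply (TensorProduct.equivFinsuppOfBasisLeft (N := B) b).injective
  ext i
  have key : ∀ u : A ⊗[K] B, TensorProduct.equivFinsuppOfBasisLeft (N := B) b u i =
      TensorProduct.lid K B (LinearMap.rTensor B (b.coord i) u) := by
    intro u
    induction u with
    | zero => simp
    | tmul x y => simp
    | add x y hx hy => simp [hx, hy]
  rw [key, key, h]

theorem aux_mul {K A : Type*} [Field K] [Ring A] [Algebra K A] (φ : A →ₗ[K] K)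
    (t s : A ⊗[K] A) :
    TensorProduct.lid K (A ⊗[K] A) (LinearMap.rTensor (A ⊗[K] A) φ
      (TensorProduct.assoc K A A A
        ((t ⊗ₜ[K] (1 : A)) * (TensorProduct.assoc K A A A).symm ((1 : A) ⊗ₜ[K] s)))) =
    (TensorProduct.lid K A (LinearMap.rTensor A φ t) ⊗ₜ[K] (1 : A)) * s := by
  induction t with
  | zero => simp
  | add x y hx hy =>
    simp only [TensorProduct.add_tmul, add_mul, map_add, hx, hy]
  | tmul a b =>
    induction s with
    | zero => simp
    | add x y hx hy =>
      simp only [TensorProduct.tmul_add, mul_add, map_add, hx, hy]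
    | tmul c d =>
      simp [Algebra.TensorProduct.tmul_mul_tmul, TensorProduct.smul_tmul']

theorem aux_comul {K A : Type*} [Field K] [Ring A] [Algebra K A] [Coalgebra K A]
    (φ : A →ₗ[K] K) (t : A ⊗[K] A) :
    TensorProduct.lid K (A ⊗[K] A) (LinearMap.rTensor (A ⊗[K] A) φ
      (LinearMap.lTensor A (Coalgebra.comul (R := K)) t)) =
    Coalgebra.comul (R := K) (TensorProduct.lid K A (LinearMap.rTensor A φ t)) := by
  induction t with
  | zero => simp
  | add x y hx hy => simp only [map_add, hx, hy]
  | tmul a b => simp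

theorem aux_NLL {K A : Type*} [Field K] [Ring A] [Algebra K A] [Coalgebra K A] :
    NLL K A ⊆ ALset K A := by
  intro a ha
  refine ⟨(Coalgebra.counit (R := K)) ∘ₗ LinearMap.mulLeft K a, ?_⟩
  have key : ∀ t : A ⊗[K] A, TensorProduct.lid K A (LinearMap.rTensor A
      ((Coalgebra.counit (R := K)) ∘ₗ LinearMap.mulLeft K a) t) =
      TensorProduct.lid K A (LinearMap.rTensor A (Coalgebra.counit (R := K))
        ((a ⊗ₜ[K] (1 : A)) * t)) := by
    intro t
    induction t with
    | zero => simp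
    | add x y hx hy => simp only [mul_add, map_add, hx, hy]
    | tmul x y => simp
  rw [key, ← (show _ = _ from ha), Coalgebra.rTensor_counit_comul]
  simp

theorem aux_sub {K A : Type*} [Field K] [Ring A] [Algebra K A] [Coalgebra K A] :
    LeftComonoidal K A ↔ ALset K A ⊆ NLL K A := by
  unfold LeftComonoidal
  rw [← (TensorProduct.assoc K A A A).injective.eq_iff, Coalgebra.coassoc_apply]
  constructor
  · rintro h x ⟨φ, rfl⟩
    show _ = _
    rw [← aux_comul, ← h, aux_mul]
  · intro h
    apply aux_sep
    intro φ
    rw [aux_comul, aux_mul]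
    exact (show _ = _ from h ⟨φ, rfl⟩).symm

/-- `A` is left-comonoidal iff `A_L = N_LL(A)`. -/
theorem stmt10 [FiniteDimensional K A] (hΔ : WeakBialg K A) :
    LeftComonoidal K A ↔ ALset K A = NLL K A := by
  rw [aux_sub]
  exact ⟨fun h => h.antisymm aux_NLL, fun h => h.subset⟩
end
end

section
/- Let A be a weak bialgebra with a Hopf antipode S, i.e. a linear map satisfying S(a₍₁₎) a₍₂₎ = a₍₁₎ S(a₍₂₎) = ε(a) 1 for all a. Then ε_LR(a) = ε_RL(a) = ε(a) 1 for all a ∈ A. -/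
open TensorProduct

noncomputable section

variable (K A : Type*) [Field K] [Ring A] [Algebra K A] [Coalgebra K A]

theorem eLR_key (t : A ⊗[K] A) :
    LinearMap.mul' K A (TensorProduct.map (eLR K A) LinearMap.id t) =
      TensorProduct.lid K A (LinearMap.rTensor A (Coalgebra.counit (R := K) (A := A))
        (Coalgebra.comul (R := K) (1 : A) * t)) := by
  induction t with
  | zero => simp
  | add x y hx hy => simp only [map_add, mul_add, hx, hy]
  | tmul x y =>
    simp only [TensorProduct.map_tmul, LinearMap.mul'_apply, eLR, inclL, LinearMap.comp_apply,
      LinearMap.mulLeft_apply, LinearMap.flip_apply, TensorProduct.mk_apply, LinearMap.id_apply,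
      LinearEquiv.coe_coe]
    generalize (Coalgebra.comul (R := K) (1 : A)) = u
    induction u with
    | zero => simp
    | add p q hp hq => simp only [map_add, add_mul, hp, hq]
    | tmul p q => simp

theorem eRL_key (t : A ⊗[K] A) :
    LinearMap.mul' K A (TensorProduct.map LinearMap.id (eRL K A) t) =
      TensorProduct.rid K A (LinearMap.lTensor A (Coalgebra.counit (R := K) (A := A))
        (t * Coalgebra.comul (R := K) (1 : A))) := by
  induction t with
  | zero => simp
  | add x y hx hy => simp only [map_add, add_mul, hx, hy]
  | tmul x y =>
    simp only [TensorProduct.map_tmul, LinearMap.mul'_apply, eRL, inclR, LinearMap.comp_apply,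
      LinearMap.mulRight_apply, TensorProduct.mk_apply, LinearMap.id_apply,
      LinearEquiv.coe_coe]
    generalize (Coalgebra.comul (R := K) (1 : A)) = u
    induction u with
    | zero => simp
    | add p q hp hq => simp only [map_add, mul_add, hp, hq]
    | tmul p q => simp

/-- if `S` is a Hopf antipode, then `ε_LR(a) = ε_RL(a) = ε(a) 1`. -/
theorem stmt12 [FiniteDimensional K A] (hΔ : WeakBialg K A) (S : A →ₗ[K] A)
    (h1 : ∀ a : A, conv K A S LinearMap.id a = epsUnit K A a)
    (h2 : ∀ a : A, conv K A LinearMap.id S a = epsUnit K A a) :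
    ∀ a : A, eLR K A a = epsUnit K A a ∧ eRL K A a = epsUnit K A a := by
  have e1 : (WithConv.toConv S : WithConv (A →ₗ[K] A)) * WithConv.toConv LinearMap.id = 1 := by
    rw [LinearMap.convMul_def, LinearMap.convOne_def]
    exact congrArg WithConv.toConv (LinearMap.ext h1)
  have e2 : (WithConv.toConv LinearMap.id : WithConv (A →ₗ[K] A)) * WithConv.toConv S = 1 := by
    rw [LinearMap.convMul_def, LinearMap.convOne_def]
    exact congrArg WithConv.toConv (LinearMap.ext h2)
  have k1 : (WithConv.toConv (eLR K A)) * WithConv.toConv LinearMap.id =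
      WithConv.toConv LinearMap.id := by
    rw [LinearMap.convMul_def]
    refine congrArg WithConv.toConv (LinearMap.ext fun a => ?_)
    have := eLR_key K A (Coalgebra.comul (R := K) a)
    rw [← hΔ, one_mul, Coalgebra.rTensor_counit_comul] at this
    simpa using this
  have k2 : (WithConv.toConv LinearMap.id) * WithConv.toConv (eRL K A) =
      WithConv.toConv LinearMap.id := by
    rw [LinearMap.convMul_def]
    refine congrArg WithConv.toConv (LinearMap.ext fun a => ?_)
    have := eRL_key K A (Coalgebra.comul (R := K) a)
    rw [← hΔ, mul_one, Coalgebra.lTensor_counit_comul] at this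
    simpa using this
  have r1 : WithConv.toConv (eLR K A) = 1 := by
    rw [← mul_one (WithConv.toConv (eLR K A)), ← e2, ← mul_assoc, k1]
  have r2 : WithConv.toConv (eRL K A) = 1 := by
    rw [← one_mul (WithConv.toConv (eRL K A)), ← e1, mul_assoc, k2]
  rw [LinearMap.convOne_def] at r1 r2
  exact fun a => ⟨LinearMap.congr_fun (WithConv.toConv_injective r1) a,
    LinearMap.congr_fun (WithConv.toConv_injective r2) a⟩
end
end

section
/- If S is a pre-antipode on a weak bialgebra A and S is anti-multiplicative (S(ab) = S(b)S(a)), then S(1) = 1. -/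
open TensorProduct

noncomputable section

variable (K A : Type*) [Field K] [Ring A] [Algebra K A] [Coalgebra K A]

/-- an anti-multiplicative pre-antipode satisfies `S(1) = 1`. -/
theorem stmt15 [FiniteDimensional K A] (hΔ : WeakBialg K A) (S : A →ₗ[K] A)
    (hpre1 : conv K A LinearMap.id S = eLR K A)
    (hpre2 : conv K A S LinearMap.id = eRL K A)
    (hanti : ∀ a b : A, S (a * b) = S b * S a) :
    S 1 = 1 := by
  have key : ∀ t : A ⊗[K] A,
      LinearMap.mul' K A (TensorProduct.map LinearMap.id S t) * S 1 =
        LinearMap.mul' K A (TensorProduct.map LinearMap.id S t) := by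
    intro t
    induction t using TensorProduct.induction_on with
    | zero => simp
    | tmul x y =>
      have h := hanti 1 y
      rw [one_mul] at h
      simp only [TensorProduct.map_tmul, LinearMap.mul'_apply, LinearMap.id_apply, mul_assoc]
      rw [← h]
    | add x y hx hy => simp only [map_add, add_mul, hx, hy]
  have h1 : LinearMap.mul' K A (TensorProduct.map LinearMap.id S
      (Coalgebra.comul (R := K) (1 : A))) = 1 := by
    have h := LinearMap.congr_fun hpre1 (1 : A)
    have e : eLR K A 1 = 1 := by
      simp [eLR, inclL, ← Algebra.TensorProduct.one_def]
      rw [Algebra.TensorProduct.one_def]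
      erw [TensorProduct.lid_tmul]
      exact one_smul K _
    rw [e] at h
    exact h
  have h2 := key (Coalgebra.comul (R := K) (1 : A))
  rw [h1, one_mul] at h2
  exact h2
end
end

section
/- Let A be a right-comonoidal weak bialgebra (i.e. (1 ⊗ Δ(1))(Δ(1) ⊗ 1) equals the iterated coproduct of 1) and S an anti-multiplicative pre-antipode on A. Then S is an antipode: S(a₍₁₎) a₍₂₎ S(a₍₃₎) = S(a) for all a. -/
open TensorProduct

noncomputable section

variable (K A : Type*) [Field K] [Ring A] [Algebra K A] [Coalgebra K A]

/-- Middle counit contraction of `A ⊗ A ⊗ A`. -/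
def midEps : (A ⊗[K] A) ⊗[K] A →ₗ[K] A ⊗[K] A :=
  LinearMap.rTensor A ((TensorProduct.rid K A).toLinearMap ∘ₗ
    LinearMap.lTensor A (Coalgebra.counit (R := K) (A := A)))

lemma lTensor_eLR (x : A ⊗[K] A) : LinearMap.lTensor A (eLR K A) x =
    midEps K A (((TensorProduct.assoc K A A A).symm
      ((1 : A) ⊗ₜ[K] Coalgebra.comul (R := K) (1 : A))) * (x ⊗ₜ[K] (1 : A))) := by
  induction x with
  | zero => simp
  | add x y hx hy => rw [map_add, hx, hy, TensorProduct.add_tmul, mul_add, map_add]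
  | tmul a b =>
    simp only [LinearMap.lTensor_tmul, eLR, LinearMap.comp_apply, LinearMap.mulLeft_apply, inclL,
      LinearMap.flip_apply, TensorProduct.mk_apply]
    generalize Coalgebra.comul (R := K) (1 : A) = D
    induction D with
    | zero => simp
    | add x y hx hy =>
      simp only [add_mul, map_add, TensorProduct.tmul_add] at hx hy ⊢
      rw [hx, hy]
    | tmul c d => simp [midEps, TensorProduct.smul_tmul]

lemma midEps_rTensor_comul (x : A ⊗[K] A) :
    midEps K A (LinearMap.rTensor A (Coalgebra.comul (R := K)) x) = x := by
  induction x with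
  | zero => simp
  | add x y hx hy => rw [map_add, map_add, hx, hy]
  | tmul a b => simp [midEps]

lemma rTensor_comul_mul (hΔ : WeakBialg K A) (a : A) (x : A ⊗[K] A) :
    LinearMap.rTensor A (Coalgebra.comul (R := K)) x *
      ((Coalgebra.comul (R := K) a) ⊗ₜ[K] (1 : A)) =
    LinearMap.rTensor A (Coalgebra.comul (R := K)) (x * (a ⊗ₜ[K] (1 : A))) := by
  induction x with
  | zero => simp
  | add x y hx hy => rw [map_add, add_mul, add_mul, map_add, hx, hy]
  | tmul c d => simp [hΔ c a]

lemma lTensor_eLR_comul (hΔ : WeakBialg K A) (hco : RightComonoidal K A) (a : A) :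
    LinearMap.lTensor A (eLR K A) (Coalgebra.comul (R := K) a) =
      Coalgebra.comul (R := K) (1 : A) * (a ⊗ₜ[K] (1 : A)) := by
  have h1 : (Coalgebra.comul (R := K) a) ⊗ₜ[K] (1 : A) =
      ((Coalgebra.comul (R := K) (1 : A)) ⊗ₜ[K] (1 : A)) *
        ((Coalgebra.comul (R := K) a) ⊗ₜ[K] (1 : A)) := by
    rw [Algebra.TensorProduct.tmul_mul_tmul, ← hΔ, one_mul, one_mul]
  have h2 := hco
  unfold RightComonoidal at h2
  rw [lTensor_eLR, h1, ← mul_assoc, h2, rTensor_comul_mul K A hΔ, midEps_rTensor_comul]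

lemma conv_assoc' (f g h : A →ₗ[K] A) (a : A) :
    conv K A (conv K A f g) h a = conv K A f (conv K A g h) a := by
  have l : ∀ x : A ⊗[K] A, LinearMap.mul' K A (TensorProduct.map (conv K A f g) h x) =
      LinearMap.mul' K A (TensorProduct.map f (LinearMap.mul' K A ∘ₗ TensorProduct.map g h)
        (TensorProduct.assoc K A A A (LinearMap.rTensor A (Coalgebra.comul (R := K)) x))) := by
    intro x
    induction x with
    | zero => simp
    | add x y hx hy => simp only [map_add, hx, hy]
    | tmul c d =>
      simp only [TensorProduct.map_tmul, conv, LinearMap.comp_apply, LinearMap.rTensor_tmul]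
      generalize Coalgebra.comul (R := K) c = D
      induction D with
      | zero => simp
      | add x y hx hy =>
        simp only [map_add, TensorProduct.add_tmul, add_mul, LinearMap.mul'_apply] at hx hy ⊢
        rw [hx, hy]
      | tmul p q => simp [mul_assoc]
  have r : ∀ x : A ⊗[K] A, LinearMap.mul' K A (TensorProduct.map f (conv K A g h) x) =
      LinearMap.mul' K A (TensorProduct.map f (LinearMap.mul' K A ∘ₗ TensorProduct.map g h)
        (LinearMap.lTensor A (Coalgebra.comul (R := K)) x)) := by
    intro x
    induction x with
    | zero => simp
    | add x y hx hy => simp only [map_add, hx, hy]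
    | tmul c d => simp [conv]
  change LinearMap.mul' K A (TensorProduct.map (conv K A f g) h (Coalgebra.comul (R := K) a)) =
    LinearMap.mul' K A (TensorProduct.map f (conv K A g h) (Coalgebra.comul (R := K) a))
  rw [l, r, Coalgebra.coassoc_apply]

lemma eRL_one : eRL K A 1 = 1 := by
  simp only [eRL, LinearMap.comp_apply, inclR, TensorProduct.mk_apply, LinearMap.mulRight_apply]
  rw [← Algebra.TensorProduct.one_def, one_mul]
  simp

/-- on a right-comonoidal weak bialgebra an anti-multiplicative
pre-antipode is an antipode: `S(a₍₁₎) a₍₂₎ S(a₍₃₎) = S(a)`. -/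
theorem stmt16 [FiniteDimensional K A] (hΔ : WeakBialg K A)
    (hco : RightComonoidal K A) (S : A →ₗ[K] A)
    (hpre1 : conv K A LinearMap.id S = eLR K A)
    (hpre2 : conv K A S LinearMap.id = eRL K A)
    (hanti : ∀ a b : A, S (a * b) = S b * S a) :
    ∀ a : A, conv K A (conv K A S LinearMap.id) S a = S a := by
  intro a
  rw [conv_assoc', hpre1]
  have h1 : conv K A S (eLR K A) a = LinearMap.mul' K A (LinearMap.rTensor A S
      (LinearMap.lTensor A (eLR K A) (Coalgebra.comul (R := K) a))) := by
    simp only [conv, LinearMap.comp_apply]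
    rw [← LinearMap.comp_apply (LinearMap.rTensor A S), LinearMap.rTensor_comp_lTensor]
  have h2 : ∀ x : A ⊗[K] A, LinearMap.mul' K A (LinearMap.rTensor A S (x * (a ⊗ₜ[K] (1 : A)))) =
      S a * LinearMap.mul' K A (TensorProduct.map S LinearMap.id x) := by
    intro x
    induction x with
    | zero => simp
    | add x y hx hy => simp only [add_mul, map_add, mul_add, hx, hy]
    | tmul c d => simp [hanti, mul_assoc]
  have h3 : LinearMap.mul' K A (TensorProduct.map S LinearMap.id
      (Coalgebra.comul (R := K) (1 : A))) = 1 := by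
    have := LinearMap.congr_fun hpre2 1
    rw [eRL_one] at this
    exact this
  rw [h1, lTensor_eLR_comul K A hΔ hco, h2, h3, mul_one]
end
end

section
/- Let A be a weak bialgebra with invertible anti-multiplicative pre-antipode S satisfying ε_LR = S ∘ ε_RR and ε_RL = S ∘ ε_LL. Then S⁻¹ is a pode: a₍₂₎ S⁻¹(a₍₁₎) = ε_RR(a), S⁻¹(a₍₂₎) a₍₁₎ = ε_LL(a), and S⁻¹(a₍₃₎) a₍₂₎ S⁻¹(a₍₁₎) = S⁻¹(a) for all a; moreover S is then an antipode. -/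
open TensorProduct

noncomputable section

variable (K A : Type*) [Field K] [Ring A] [Algebra K A] [Coalgebra K A]

theorem aux_RL (x : A ⊗[K] A) :
    LinearMap.mul' K A (TensorProduct.map LinearMap.id (eRL K A) x) =
      TensorProduct.rid K A (LinearMap.lTensor A (Coalgebra.counit (R := K) (A := A))
        (x * Coalgebra.comul (R := K) (1 : A))) := by
  induction x using TensorProduct.induction_on with
  | zero => simp
  | add x y hx hy => simp only [map_add, hx, hy, add_mul]
  | tmul a b =>
    simp only [eRL, inclR, TensorProduct.map_tmul, LinearMap.mul'_apply, LinearMap.id_apply,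
      LinearMap.comp_apply, LinearMap.mulRight_apply, TensorProduct.mk_apply,
      LinearEquiv.coe_coe]
    generalize Coalgebra.comul (R := K) (1 : A) = y
    induction y using TensorProduct.induction_on with
    | zero => simp
    | add x y hx hy => simp only [map_add, hx, hy, mul_add]
    | tmul c d => simp

theorem aux_LL (x : A ⊗[K] A) :
    LinearMap.mul' K A (TensorProduct.map LinearMap.id (eLL K A)
      (TensorProduct.comm K A A x)) =
      TensorProduct.lid K A (LinearMap.rTensor A (Coalgebra.counit (R := K) (A := A))
        (x * Coalgebra.comul (R := K) (1 : A))) := by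
  induction x using TensorProduct.induction_on with
  | zero => simp
  | add x y hx hy => simp only [map_add, hx, hy, add_mul]
  | tmul a b =>
    simp only [eLL, inclL, TensorProduct.comm_tmul, TensorProduct.map_tmul, LinearMap.mul'_apply,
      LinearMap.id_apply, LinearMap.comp_apply, LinearMap.mulRight_apply, LinearMap.flip_apply,
      TensorProduct.mk_apply, LinearEquiv.coe_coe]
    generalize Coalgebra.comul (R := K) (1 : A) = y
    induction y using TensorProduct.induction_on with
    | zero => simp
    | add x y hx hy => simp only [map_add, hx, hy, mul_add]
    | tmul c d => simp

theorem conv_RL (hΔ : WeakBialg K A) (a : A) : conv K A LinearMap.id (eRL K A) a = a := by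
  simp only [conv, LinearMap.comp_apply]
  rw [aux_RL, ← hΔ, mul_one]
  simp

theorem copConv_LL (hΔ : WeakBialg K A) (a : A) :
    copConv K A LinearMap.id (eLL K A) a = a := by
  simp only [copConv, LinearMap.comp_apply, LinearEquiv.coe_coe]
  rw [aux_LL, ← hΔ, mul_one]
  simp

/-- An anti-multiplicative map turns `f(a₍₁₎) g(a₍₂₎)` into `P g(a₍₂₎) P f(a₍₁₎)`. -/
theorem anti_conv (P : A →ₗ[K] A) (hP : ∀ a b : A, P (a * b) = P b * P a)
    (f g : A →ₗ[K] A) (a : A) :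
    P (conv K A f g a) = copConv K A (P ∘ₗ g) (P ∘ₗ f) a := by
  simp only [conv, copConv, LinearMap.comp_apply, LinearEquiv.coe_coe]
  generalize Coalgebra.comul (R := K) a = y
  induction y using TensorProduct.induction_on with
  | zero => simp
  | add x y hx hy => simp only [map_add, hx, hy]
  | tmul c d => simp [hP]

theorem anti_copConv (P : A →ₗ[K] A) (hP : ∀ a b : A, P (a * b) = P b * P a)
    (f g : A →ₗ[K] A) (a : A) :
    P (copConv K A f g a) = conv K A (P ∘ₗ g) (P ∘ₗ f) a := by
  simp only [conv, copConv, LinearMap.comp_apply, LinearEquiv.coe_coe]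
  generalize Coalgebra.comul (R := K) a = y
  induction y using TensorProduct.induction_on with
  | zero => simp
  | add x y hx hy => simp only [map_add, hx, hy]
  | tmul c d => simp [hP]

/-- if `S` is an invertible anti-multiplicative pre-antipode with
`ε_LR = S ∘ ε_RR` and `ε_RL = S ∘ ε_LL`, then `S⁻¹` is a pode and `S` an antipode. -/
theorem stmt19 [FiniteDimensional K A] (hΔ : WeakBialg K A) (S T : A →ₗ[K] A)
    (hTS : T ∘ₗ S = LinearMap.id) (hST : S ∘ₗ T = LinearMap.id)
    (hanti : ∀ a b : A, S (a * b) = S b * S a)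
    (hpre1 : conv K A LinearMap.id S = eLR K A)
    (hpre2 : conv K A S LinearMap.id = eRL K A)
    (hLR : eLR K A = S ∘ₗ eRR K A)
    (hRL : eRL K A = S ∘ₗ eLL K A) :
    (∀ a : A, copConv K A LinearMap.id T a = eRR K A a) ∧
    (∀ a : A, copConv K A T LinearMap.id a = eLL K A a) ∧
    (∀ a : A, copConv K A (copConv K A T LinearMap.id) T a = T a) ∧
    (∀ a : A, conv K A (conv K A S LinearMap.id) S a = S a) := by
  have hts : ∀ x, T (S x) = x := fun x => LinearMap.congr_fun hTS x
  have hst : ∀ x, S (T x) = x := fun x => LinearMap.congr_fun hST x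
  have hT : ∀ a b : A, T (a * b) = T b * T a := by
    intro a b
    rw [← hts (T b * T a), hanti, hst, hst]
  have h1 : ∀ a : A, copConv K A LinearMap.id T a = eRR K A a := by
    intro a
    have h := anti_conv K A T hT LinearMap.id S a
    rw [hTS, LinearMap.comp_id, hpre1, hLR, LinearMap.comp_apply, hts] at h
    exact h.symm
  have h2 : ∀ a : A, copConv K A T LinearMap.id a = eLL K A a := by
    intro a
    have h := anti_conv K A T hT S LinearMap.id a
    rw [hTS, LinearMap.comp_id, hpre2, hRL, LinearMap.comp_apply, hts] at h
    exact h.symm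
  refine ⟨h1, h2, ?_, ?_⟩
  · intro a
    have h3 : copConv K A T LinearMap.id = eLL K A := LinearMap.ext h2
    have h := anti_copConv K A S hanti (eLL K A) T a
    rw [hST, ← hRL, conv_RL K A hΔ] at h
    rw [h3, ← hts (copConv K A (eLL K A) T a), h]
  · intro a
    have h := anti_copConv K A S hanti LinearMap.id (eLL K A) a
    rw [LinearMap.comp_id, ← hRL, copConv_LL K A hΔ] at h
    rw [hpre2, h]
end
end
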